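/- arXiv:0706.3723 — 2 statements merged into one kernel-verified Lean document; each statement's English description precedes it below -/
import Mathlib

section
/- Let M be a finite set of positive integers, let t ≥ 1, let p' ≥ 1 be a natural number, and let T be a natural number with T ≥ p'·(t + lcm(M) − 1). Let c : Fin p' → ℕ be a family of positive natural numbers (c i ≥ 1 for all i), and let b ∈ ℕ be such that (Σ_i c i) =^M_T b. Then there exists a family d : Fin p' → ℕ of positive natural numbers (d i ≥ 1 for all i) with Σ_i d i = b and c i =^M_t d i for every i. -/
/-- Two natural numbers `a` and `b` are *threshold-`t` equal mod `M`*, written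
`a =^M_t b`, if either `a = b`, or both `a ≥ t` and `b ≥ t` and `a ≡ b (mod m)`
for every `m ∈ M`. -/
def ThresholdEq (M : Finset ℕ) (t a b : ℕ) : Prop :=
  a = b ∨ (t ≤ a ∧ t ≤ b ∧ ∀ m ∈ M, a % m = b % m)

/-- The smallest representative of the class of `a` for threshold `t` and period `L`. -/
def thresholdReduce (t L a : ℕ) : ℕ :=
  if a < t then a else t + (a - t) % L

lemma thresholdReduce_of_lt {t L a : ℕ} (h : a < t) : thresholdReduce t L a = a :=
  if_pos h

lemma le_thresholdReduce {t L a : ℕ} (h : t ≤ a) : t ≤ thresholdReduce t L a := by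
  rw [thresholdReduce, if_neg (not_lt.2 h)]
  exact Nat.le_add_right _ _

lemma thresholdReduce_le (t a : ℕ) {L : ℕ} (hL : 0 < L) :
    thresholdReduce t L a ≤ t + L - 1 := by
  have := Nat.mod_lt (a - t) hL
  unfold thresholdReduce
  split_ifs <;> omega

lemma thresholdReduce_modEq (t L a : ℕ) : thresholdReduce t L a ≡ a [MOD L] := by
  unfold thresholdReduce
  split_ifs with h
  · rfl
  · simpa [Nat.add_sub_cancel' (not_lt.1 h)] using (Nat.mod_modEq (a - t) L).add_left t

lemma modEq_finset_lcm_iff {M : Finset ℕ} {a b : ℕ} :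
    a ≡ b [MOD M.lcm id] ↔ ∀ m ∈ M, a % m = b % m := by
  have key (n : ℕ) : a ≡ b [MOD n] ↔ n ∣ ((b : ℤ) - a).natAbs := by
    rw [Nat.modEq_iff_dvd, Int.natCast_dvd]
  rw [key, Finset.lcm_dvd_iff]
  exact forall₂_congr fun m _ => (key m).symm

/-- Numerical core of the combinatorial lemma: positive class sizes
`c i` summing to a number threshold-`T` equal mod `M` to `b` can be matched
by positive sizes `d i` summing to `b` with `c i =^M_t d i` for all `i`. -/
theorem class_sizes_matching
    (M : Finset ℕ) (hM : ∀ m ∈ M, 0 < m)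
    (t : ℕ) (ht : 1 ≤ t) (p' : ℕ) (hp' : 1 ≤ p')
    (T : ℕ) (hT : p' * (t + M.lcm id - 1) ≤ T)
    (c : Fin p' → ℕ) (hc : ∀ i, 1 ≤ c i)
    (b : ℕ) (hb : ThresholdEq M T (∑ i, c i) b) :
    ∃ d : Fin p' → ℕ, (∀ i, 1 ≤ d i) ∧ (∑ i, d i = b) ∧
      ∀ i, ThresholdEq M t (c i) (d i) := by
  rcases hb with rfl | ⟨hcT, hbT, hmod⟩
  · exact ⟨c, hc, rfl, fun i => Or.inl rfl⟩
  set L := M.lcm id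
  have hL : 0 < L := Nat.pos_of_ne_zero fun h => by
    obtain ⟨m, hm, h0⟩ := Finset.lcm_eq_zero_iff.1 h
    exact (hM m hm).ne' h0
  obtain ⟨i₀, hi₀⟩ : ∃ i, t ≤ c i := by
    have : Nonempty (Fin p') := ⟨⟨0, hp'⟩⟩
    by_contra! h
    have hlt : ∑ i, c i < ∑ _i : Fin p', t :=
      Finset.sum_lt_sum_of_nonempty Finset.univ_nonempty fun i _ => h i
    have hle : p' * t ≤ p' * (t + L - 1) := Nat.mul_le_mul_left _ (by omega)
    simp only [Finset.sum_const, Finset.card_univ, Fintype.card_fin, smul_eq_mul] at hlt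
    omega
  set e : Fin p' → ℕ := fun i => thresholdReduce t L (c i)
  have he : ∑ i, e i ≤ b := by
    refine le_trans ?_ (hT.trans hbT)
    simpa using Finset.sum_le_card_nsmul Finset.univ e _
      fun i _ => thresholdReduce_le t (c i) hL
  have hdvd : L ∣ b - ∑ i, e i := by
    refine (Nat.modEq_iff_dvd' he).1 (Nat.ModEq.trans ?_ (modEq_finset_lcm_iff.2 hmod))
    exact Nat.ModEq.sum fun i _ => thresholdReduce_modEq t L (c i)
  set r : Fin p' → ℕ := Pi.single i₀ (b - ∑ j, e j) with hr
  have hd_ge (i) (hi : t ≤ c i) : t ≤ e i + r i :=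
    (le_thresholdReduce hi).trans (Nat.le_add_right _ _)
  have hd_lt (i) (hi : c i < t) : e i + r i = c i := by
    have hne : i ≠ i₀ := by
      rintro rfl
      exact hi.not_ge hi₀
    rw [hr, Pi.single_eq_of_ne hne, add_zero]
    exact thresholdReduce_of_lt hi
  refine ⟨fun i => e i + r i, fun i => ?_, ?_, fun i => ?_⟩
  · rcases lt_or_ge (c i) t with hi | hi
    · exact (hc i).trans_eq (hd_lt i hi).symm
    · exact ht.trans (hd_ge i hi)
  · simp [hr, Finset.sum_add_distrib, Nat.add_sub_cancel' he]
  · rcases lt_or_ge (c i) t with hi | hi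
    · exact Or.inl (hd_lt i hi).symm
    · refine Or.inr ⟨hi, hd_ge i hi, modEq_finset_lcm_iff.1 ?_⟩
      have hs : L ∣ r i := by
        rcases eq_or_ne i i₀ with rfl | hne
        · rwa [hr, Pi.single_eq_same]
        · simp [hr, Pi.single_eq_of_ne hne]
      simpa using ((thresholdReduce_modEq t L (c i)).add
        (Nat.modEq_zero_iff_dvd.2 hs)).symm
end

section
/- Let M be a finite set of positive integers with L = lcm(M) and let r ≥ 2. Let A and B be finite sets with |A| ≥ (2^{r+1} − 4)·L, |B| ≥ (2^{r+1} − 4)·L, and |A| ≡ |B| (mod m) for every m ∈ M.uThen for every subset S ⊆ A there exists a subset D ⊆ B such that |S| =^M_{(2^r − 4)·L} |D| and |A∖S| =^M_{(2^r − 4)·L} |B∖D|. -/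
theorem mod_eq_of_add_mod_eq {m s s' d d' : ℕ} (hsd : s % m = d % m)
    (h : (s + s') % m = (d + d') % m) : s' % m = d' % m :=
  Nat.ModEq.add_left_cancel hsd h

/-- Numerical form of Duplicator's answer: a splitting `s + s'` of a large number can be matched
by a splitting of any large number congruent to it, with both parts threshold equal. -/
theorem exists_add_eq_thresholdEq {M : Finset ℕ} {L t s s' b : ℕ} (hL : 0 < L)
    (hdvd : ∀ m ∈ M, m ∣ L) (ha : 2 * t ≤ s + s') (hb : 2 * t + L ≤ b)
    (hcong : ∀ m ∈ M, (s + s') % m = b % m) :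
    ∃ d d', d + d' = b ∧ ThresholdEq M t s d ∧ ThresholdEq M t s' d' := by
  rcases lt_or_ge s t with hs | hs
  · obtain ⟨d', rfl⟩ := Nat.exists_eq_add_of_le (show s ≤ b by omega)
    exact ⟨s, d', rfl, Or.inl rfl, Or.inr ⟨by omega, by omega, fun m hm =>
      mod_eq_of_add_mod_eq rfl (hcong m hm)⟩⟩
  rcases lt_or_ge s' t with hs' | hs'
  · obtain ⟨d, rfl⟩ := Nat.exists_eq_add_of_le' (show s' ≤ b by omega)
    exact ⟨d, s', rfl, Or.inr ⟨by omega, by omega, fun m hm =>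
      Nat.ModEq.add_right_cancel' s' (hcong m hm)⟩, Or.inl rfl⟩
  · have hlt : (s - t) % L < L := Nat.mod_lt _ hL
    obtain ⟨d', rfl⟩ := Nat.exists_eq_add_of_le (show t + (s - t) % L ≤ b by omega)
    have hsd : ∀ m ∈ M, s % m = (t + (s - t) % L) % m := fun m hm => by
      have h : t + (s - t) % L ≡ t + (s - t) [MOD m] :=
        ((Nat.mod_modEq (s - t) L).of_dvd (hdvd m hm)).add_left t
      rw [Nat.add_sub_cancel' hs] at h
      exact h.symm
    exact ⟨_, d', rfl, Or.inr ⟨hs, by omega, hsd⟩, Or.inr ⟨hs', by omega, fun m hm =>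
      mod_eq_of_add_mod_eq (hsd m hm) (hcong m hm)⟩⟩

/-- Inductive step on pure sets: if `A` and `B` are large enough and of
congruent cardinalities mod every `m ∈ M`, then any subset `S ⊆ A` can be
answered by a subset `D ⊆ B` such that `|S| =^M_{(2^r−4)·L} |D|` and
`|A∖S| =^M_{(2^r−4)·L} |B∖D|`, where `L = lcm(M)`. -/
theorem duplicator_set_move_on_sets
    (M : Finset ℕ) (hM : ∀ m ∈ M, 0 < m) (r : ℕ) (hr : 2 ≤ r)
    (A B : Type) [Fintype A] [Fintype B] [DecidableEq A] [DecidableEq B]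
    (hA : (2 ^ (r + 1) - 4) * M.lcm id ≤ Fintype.card A)
    (hB : (2 ^ (r + 1) - 4) * M.lcm id ≤ Fintype.card B)
    (hcong : ∀ m ∈ M, Fintype.card A % m = Fintype.card B % m)
    (S : Finset A) :
    ∃ D : Finset B,
      ThresholdEq M ((2 ^ r - 4) * M.lcm id) S.card D.card ∧
      ThresholdEq M ((2 ^ r - 4) * M.lcm id) Sᶜ.card Dᶜ.card := by
  have hL : 0 < M.lcm id :=
    Nat.pos_of_ne_zero fun h => by
      obtain ⟨m, hm, h0⟩ := Finset.lcm_eq_zero_iff.mp h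
      exact (hM m hm).ne' h0
  have hN : (2 ^ (r + 1) - 4) * M.lcm id = 2 * ((2 ^ r - 4) * M.lcm id) + 4 * M.lcm id := by
    have h4 : 2 ^ 2 ≤ 2 ^ r := Nat.pow_le_pow_right two_pos hr
    have h : 2 ^ (r + 1) - 4 = 2 * (2 ^ r - 4) + 4 := by omega
    rw [h]
    ring
  have hS := S.card_add_card_compl
  obtain ⟨d, d', hd, h, h'⟩ := exists_add_eq_thresholdEq (M := M) (s := S.card) (s' := Sᶜ.card)
    (t := (2 ^ r - 4) * M.lcm id) hL (fun m hm => Finset.dvd_lcm (f := id) hm)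
    (by omega) (b := Fintype.card B) (by omega) (by rwa [hS])
  obtain ⟨D, -, hD⟩ := Finset.exists_subset_card_eq
    (show d ≤ (Finset.univ : Finset B).card by rw [Finset.card_univ]; omega)
  have hD' := D.card_add_card_compl
  obtain rfl : d' = Dᶜ.card := by omega
  exact ⟨D, hD ▸ h, h'⟩
end
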